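/- (Finite Parseval identity.) For any N ∈ ℕ and any 2×2 real matrices A_0, …, A_N, ∫_{-1}^{1} tr( (Σ_{w=0}^{N} A_w Q_w(x)) W_{p,n}(x) (Σ_{w=0}^{N} A_w Q_w(x))^T ) dx = Σ_{w=0}^{N} tr(A_w A_w^T). -/

import Mathlib

open Matrix

/-- Pochhammer symbol `(a)_k = a (a+1) ⋯ (a+k-1)`. -/
noncomputable def poch (a : ℝ) (k : ℕ) : ℝ := ∏ i ∈ Finset.range k, (a + i)

/-- Gegenbauer polynomial `C_w^λ(x)`, with the convention `C_w^λ = 0` for `w < 0`. -/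
noncomputable def geg (l : ℝ) (w : ℤ) (x : ℝ) : ℝ :=
  if w < 0 then 0 else
    poch (2 * l) w.toNat / (w.toNat.factorial : ℝ) *
      ∑ k ∈ Finset.range (w.toNat + 1),
        (poch (-(w.toNat : ℝ)) k * poch ((w.toNat : ℝ) + 2 * l) k) /
            (poch (l + 1 / 2) k * (k.factorial : ℝ)) * ((1 - x) / 2) ^ k

/-- The weight matrix `W_{p,n}(x)`. -/
noncomputable def Wmat (n : ℕ) (p : ℝ) (x : ℝ) : Matrix (Fin 2) (Fin 2) ℝ :=
  (1 - x ^ 2) ^ ((n : ℝ) / 2 - 1) •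
    !![p * x ^ 2 + (n : ℝ) - p, -(n : ℝ) * x; -(n : ℝ) * x, ((n : ℝ) - p) * x ^ 2 + p]

/-- The matrix valued polynomial `P_w`. -/
noncomputable def Pmat (n : ℕ) (p : ℝ) (w : ℕ) (x : ℝ) : Matrix (Fin 2) (Fin 2) ℝ :=
  !![1 / ((n : ℝ) + 1) * geg (((n : ℝ) + 1) / 2) (w : ℤ) x +
        1 / (p + w) * geg (((n : ℝ) + 3) / 2) ((w : ℤ) - 2) x,
      1 / (p + w) * geg (((n : ℝ) + 3) / 2) ((w : ℤ) - 1) x;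
      1 / ((n : ℝ) - p + w) * geg (((n : ℝ) + 3) / 2) ((w : ℤ) - 1) x,
      1 / ((n : ℝ) + 1) * geg (((n : ℝ) + 1) / 2) (w : ℤ) x +
        1 / ((n : ℝ) - p + w) * geg (((n : ℝ) + 3) / 2) ((w : ℤ) - 2) x]

/-- The normalizing matrix `S_w`: the (diagonal, positive definite) inverse square root
of `‖P_w‖² = ∫_{-1}^1 P_w W_{p,n} P_w^T dx`, given explicitly. -/
noncomputable def Smat (n : ℕ) (p : ℝ) (w : ℕ) : Matrix (Fin 2) (Fin 2) ℝ :=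
  Real.sqrt (((w.factorial : ℝ) * ((n : ℝ) + 1) * ((n : ℝ) + 2 * w + 1) *
        Real.Gamma ((n : ℝ) / 2 + 3 / 2)) /
      (Real.sqrt Real.pi * 2 ^ (w / 2) * Real.Gamma ((n : ℝ) / 2 + 1 + (w / 2 : ℕ)) *
        ∏ k ∈ Finset.range ((w + 1) / 2), ((n : ℝ) + 2 * k + 1))) •
    Matrix.diagonal ![Real.sqrt ((p + w) / (p * ((n : ℝ) - p + w + 1))),
      Real.sqrt (((n : ℝ) - p + w) / (((n : ℝ) - p) * (p + w + 1)))]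

/-- The orthonormal matrix valued polynomials `Q_w = S_w P_w`. -/
noncomputable def Qmat (n : ℕ) (p : ℝ) (w : ℕ) (x : ℝ) : Matrix (Fin 2) (Fin 2) ℝ :=
  Smat n p w * Pmat n p w x

/-!
Cleared of denominators, `P_w` becomes `R_w = G_w D + G_w' J` with `G_w = C_w^((n+1)/2)`,
`D = diag(p, n - p)` and `J = !![x, 1; 1, x]`. The polynomial part `W` of the weight satisfies
`J W J = (1 - x²)² D`, so `G_w` and `G_v` enter `R_w W R_vᵀ` only through `G_w G_v`, its derivative
and `G_w' G_v'`. Integration by parts against `(1 - x²)^(n/2 - 1)` kills the off-diagonal entries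
and, together with the Gegenbauer differential equation, turns the diagonal ones into multiples of
`∫ (1 - x²)^(n/2) G_w G_v`, which is the scalar Gegenbauer inner product. Hence the `Q_w` are
orthonormal, and expanding the trace gives the identity. The differential equation and the norms of
the `G_w` come from ladder relations between neighbouring degrees, which are coefficientwise
identities for the hypergeometric series in `(1 - x) / 2`.
-/

open Polynomial MeasureTheory

section Pochhammer

lemma poch_succ (a : ℝ) (k : ℕ) : poch a (k + 1) = poch a k * (a + k) :=
  Finset.prod_range_succ _ _

lemma poch_add (a : ℝ) (j k : ℕ) : poch a (j + k) = poch a j * poch (a + j) k := by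
  simp only [poch, Finset.prod_range_add, Nat.cast_add, add_assoc]

lemma poch_succ_left (a : ℝ) (k : ℕ) : poch a (k + 1) = a * poch (a + 1) k := by
  rw [add_comm, poch_add]
  simp [poch]

lemma poch_mul_add (a : ℝ) (k : ℕ) : poch a k * (a + k) = a * poch (a + 1) k := by
  rw [← poch_succ, poch_succ_left]

lemma poch_pos {a : ℝ} (ha : 0 < a) (k : ℕ) : 0 < poch a k :=
  Finset.prod_pos fun i _ ↦ by positivity

lemma poch_neg_natCast_eq_zero {w k : ℕ} (h : w < k) : poch (-(w : ℝ)) k = 0 :=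
  Finset.prod_eq_zero (Finset.mem_range.mpr h) (neg_add_cancel _)

end Pochhammer

section GegenbauerCoeff

/-- The coefficient of `((1 - x) / 2) ^ k` in the Gegenbauer polynomial `C_w^l(x)`. -/
noncomputable def gegenbauerCoeff (l : ℝ) (w k : ℕ) : ℝ :=
  poch (2 * l) w / (w.factorial : ℝ) *
    ((poch (-(w : ℝ)) k * poch ((w : ℝ) + 2 * l) k) / (poch (l + 1 / 2) k * (k.factorial : ℝ)))

variable {l : ℝ}

lemma gegenbauerCoeff_succ_right (hl : 0 < l) (w k : ℕ) :
    ((k : ℝ) + 1) * (l + 1 / 2 + k) * gegenbauerCoeff l w (k + 1) =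
      (k - w) * (w + 2 * l + k) * gegenbauerCoeff l w k := by
  have hpoch := (poch_pos (show 0 < l + 1 / 2 by positivity) k).ne'
  have hfactor : l + 1 / 2 + k ≠ 0 := by positivity
  simp only [gegenbauerCoeff, poch_succ, Nat.factorial_succ, Nat.cast_mul, Nat.cast_succ]
  generalize poch (l + 1 / 2) k = u at *
  generalize l + 1 / 2 + (k : ℝ) = v at *
  field_simp
  ring

lemma gegenbauerCoeff_succ_left (l : ℝ) (w k : ℕ) :
    ((w : ℝ) + 1 - k) * gegenbauerCoeff l (w + 1) k =
      (w + 2 * l + k) * gegenbauerCoeff l w k := by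
  have hneg : poch (-((w : ℝ) + 1)) k * (w + 1 - k) = (w + 1) * poch (-(w : ℝ)) k := by
    have h := poch_mul_add (-((w : ℝ) + 1)) k
    rw [show -((w : ℝ) + 1) + 1 = -w by ring] at h
    linear_combination -h
  have hpos : poch ((w : ℝ) + 2 * l) k * (w + 2 * l + k) =
      (w + 2 * l) * poch ((w : ℝ) + 1 + 2 * l) k := by
    rw [poch_mul_add, add_right_comm]
  simp only [gegenbauerCoeff, poch_succ (2 * l), Nat.factorial_succ, Nat.cast_mul, Nat.cast_succ]
  have hw : (w : ℝ) + 1 ≠ 0 := by positivity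
  calc _ = poch (2 * l) w / w.factorial / (poch (l + 1 / 2) k * k.factorial) *
        ((2 * l + w) / (w + 1)) * (poch (-((w : ℝ) + 1)) k * (w + 1 - k)) *
          poch ((w : ℝ) + 1 + 2 * l) k := by field_simp
    _ = poch (2 * l) w / w.factorial / (poch (l + 1 / 2) k * k.factorial) *
        poch (-(w : ℝ)) k * ((w + 2 * l) * poch ((w : ℝ) + 1 + 2 * l) k) := by
      rw [hneg]; field_simp; ring
    _ = _ := by rw [← hpos]; ring

lemma gegenbauerCoeff_succ_succ (hl : 0 < l) (w k : ℕ) :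
    ((k : ℝ) + 1) * (l + 1 / 2 + k) * gegenbauerCoeff l (w + 1) (k + 1) =
      -((w + 1 + 2 * l + k) * (w + 2 * l + k) * gegenbauerCoeff l w k) := by
  have h := gegenbauerCoeff_succ_right hl (w + 1) k
  push_cast at h
  linear_combination h - (w + 1 + 2 * l + k) * gegenbauerCoeff_succ_left l w k

lemma gegenbauerCoeff_add_one_param (hl : 0 < l) (w k : ℕ) :
    ((k : ℝ) + 1) * gegenbauerCoeff l (w + 1) (k + 1) = -(4 * l * gegenbauerCoeff (l + 1) w k) := by
  have hneg : poch (-((w : ℝ) + 1)) (k + 1) = -((w : ℝ) + 1) * poch (-(w : ℝ)) k := by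
    rw [poch_succ_left, neg_add_rev, neg_add_cancel_comm]
  have hhalf : poch (l + 1 / 2) (k + 1) = (l + 1 / 2) * poch (l + 1 + 1 / 2) k := by
    rw [poch_succ_left, add_right_comm]
  have htop : poch (2 * l) (w + 1) * poch ((w : ℝ) + 1 + 2 * l) (k + 1) =
      2 * l * (2 * l + 1) * (poch (2 * (l + 1)) w * poch ((w : ℝ) + 2 * (l + 1)) k) := by
    calc _ = poch (2 * l) (w + k + 1 + 1) := by
          rw [show w + k + 1 + 1 = w + 1 + (k + 1) by ring, poch_add _ (w + 1), add_comm (2 * l)]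
          push_cast; ring_nf
      _ = _ := by
          rw [poch_succ_left, poch_succ_left, poch_add,
            show 2 * l + 1 + 1 = 2 * (l + 1) by ring, add_comm (w : ℝ)]
          ring
  have hpoch := (poch_pos (show 0 < l + 1 + 1 / 2 by positivity) k).ne'
  simp only [gegenbauerCoeff, Nat.factorial_succ, Nat.cast_mul, Nat.cast_succ]
  calc _ = (k + 1) * (poch (2 * l) (w + 1) * poch ((w : ℝ) + 1 + 2 * l) (k + 1)) *
        poch (-((w : ℝ) + 1)) (k + 1) /
          (((w + 1) * w.factorial) * (poch (l + 1 / 2) (k + 1) * ((k + 1) * k.factorial))) := by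
        field_simp
    _ = _ := by
      rw [htop, hneg, hhalf]
      generalize poch (l + 1 + 1 / 2) k = u at *
      field_simp
      ring

end GegenbauerCoeff

section Gegenbauer

/-- The Gegenbauer polynomial `C_w^l` in the variable `t = (1 - x) / 2`, in which it is a
terminating hypergeometric series. -/
noncomputable def gegenbauerShifted (l : ℝ) (w : ℕ) : ℝ[X] :=
  ∑ k ∈ Finset.range (w + 1), monomial k (gegenbauerCoeff l w k)

/-- The Gegenbauer polynomial `C_w^l` as a polynomial in `x`. -/
noncomputable def gegenbauer (l : ℝ) (w : ℕ) : ℝ[X] :=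
  (gegenbauerShifted l w).comp (C (1 / 2) * (1 - X))

lemma coeff_gegenbauerShifted (l : ℝ) (w k : ℕ) :
    (gegenbauerShifted l w).coeff k = gegenbauerCoeff l w k := by
  simp only [gegenbauerShifted, finsetSum_coeff, coeff_monomial, Finset.sum_ite_eq',
    Finset.mem_range, ite_eq_left_iff, not_lt]
  intro h
  simp [gegenbauerCoeff, poch_neg_natCast_eq_zero h]

lemma geg_natCast (l : ℝ) (w : ℕ) (x : ℝ) : geg l (w : ℤ) x = (gegenbauer l w).eval x := by
  have hx : eval x (C (1 / 2) * (1 - X) : ℝ[X]) = (1 - x) / 2 := by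
    simp only [eval_mul, eval_C, eval_sub, eval_one, eval_X]
    ring
  simp only [geg, gegenbauer, eval_comp, hx, gegenbauerShifted, eval_finsetSum, eval_monomial,
    gegenbauerCoeff, Int.toNat_natCast, if_neg (Int.natCast_nonneg w).not_gt, Finset.mul_sum,
    mul_assoc]

lemma geg_of_neg (l : ℝ) {w : ℤ} (hw : w < 0) (x : ℝ) : geg l w x = 0 :=
  if_pos hw

lemma coeff_X_mul_derivative (f : ℝ[X]) (k : ℕ) : (X * derivative f).coeff k = k * f.coeff k := by
  cases k with
  | zero => simp
  | succ k => rw [coeff_X_mul, coeff_derivative, Nat.cast_succ, mul_comm]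

variable {l : ℝ}

lemma derivative_gegenbauerShifted_lower (hl : 0 < l) (w : ℕ) :
    derivative (gegenbauerShifted l w) =
      (1 - C 2 * X) * derivative (gegenbauerShifted l (w + 1)) +
        C (2 * ((w : ℝ) + 1)) * gegenbauerShifted l (w + 1) := by
  ext k
  simp only [sub_mul, one_mul, mul_assoc (C (2 : ℝ)), coeff_add, coeff_sub, coeff_C_mul,
    coeff_X_mul_derivative, coeff_derivative, coeff_gegenbauerShifted]
  have hk : l + 1 / 2 + k ≠ 0 := by positivity
  apply mul_left_cancel₀ hk
  linear_combination gegenbauerCoeff_succ_right hl w k - gegenbauerCoeff_succ_succ hl w k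
    - 2 * (l + 1 / 2 + k) * gegenbauerCoeff_succ_left l w k

lemma derivative_gegenbauerShifted_raise (hl : 0 < l) (w : ℕ) :
    derivative (gegenbauerShifted l (w + 1)) =
      (1 - C 2 * X) * derivative (gegenbauerShifted l w) -
        C (2 * ((w : ℝ) + 2 * l)) * gegenbauerShifted l w := by
  ext k
  simp only [sub_mul, one_mul, mul_assoc (C (2 : ℝ)), coeff_sub, coeff_C_mul,
    coeff_X_mul_derivative, coeff_derivative, coeff_gegenbauerShifted]
  have hk : l + 1 / 2 + k ≠ 0 := by positivity
  apply mul_left_cancel₀ hk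
  linear_combination gegenbauerCoeff_succ_succ hl w k - gegenbauerCoeff_succ_right hl w k

lemma derivative_gegenbauerShifted_succ (hl : 0 < l) (w : ℕ) :
    derivative (gegenbauerShifted l (w + 1)) = -C (4 * l) * gegenbauerShifted (l + 1) w := by
  ext k
  rw [coeff_derivative, neg_mul, coeff_neg, coeff_C_mul, coeff_gegenbauerShifted,
    coeff_gegenbauerShifted, ← gegenbauerCoeff_add_one_param hl, mul_comm]

lemma derivative_gegenbauer (l : ℝ) (w : ℕ) :
    derivative (gegenbauer l w) =
      -C (1 / 2) * (derivative (gegenbauerShifted l w)).comp (C (1 / 2) * (1 - X)) := by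
  simp [gegenbauer, derivative_comp]

lemma gegenbauer_zero (l : ℝ) : gegenbauer l 0 = 1 := by
  simp [gegenbauer, gegenbauerShifted, gegenbauerCoeff, poch]

lemma derivative_gegenbauer_succ (hl : 0 < l) (w : ℕ) :
    derivative (gegenbauer l (w + 1)) = C (2 * l) * gegenbauer (l + 1) w := by
  rw [derivative_gegenbauer, derivative_gegenbauerShifted_succ hl, mul_comp, neg_comp, C_comp,
    ← gegenbauer, neg_mul, neg_mul, mul_neg, neg_neg, ← mul_assoc, ← C_mul]
  ring_nf

lemma one_sub_two_mul_X_comp :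
    (1 - C 2 * X : ℝ[X]).comp (C (1 / 2) * (1 - X)) = X := by
  simp [← mul_assoc, ← C_mul]

lemma derivative_gegenbauer_lower (hl : 0 < l) (w : ℕ) :
    derivative (gegenbauer l w) =
      X * derivative (gegenbauer l (w + 1)) - C ((w : ℝ) + 1) * gegenbauer l (w + 1) := by
  have hC : (C (1 / 2) * C (2 * ((w : ℝ) + 1)) : ℝ[X]) = C ((w : ℝ) + 1) := by
    rw [← C_mul]; ring_nf
  rw [derivative_gegenbauer, derivative_gegenbauerShifted_lower hl, add_comp, mul_comp, mul_comp,
    one_sub_two_mul_X_comp, C_comp, derivative_gegenbauer, gegenbauer]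
  linear_combination -(gegenbauerShifted l (w + 1)).comp (C (1 / 2) * (1 - X)) * hC

lemma derivative_gegenbauer_raise (hl : 0 < l) (w : ℕ) :
    derivative (gegenbauer l (w + 1)) =
      X * derivative (gegenbauer l w) + C ((w : ℝ) + 2 * l) * gegenbauer l w := by
  have hC : (C (1 / 2) * C (2 * ((w : ℝ) + 2 * l)) : ℝ[X]) = C ((w : ℝ) + 2 * l) := by
    rw [← C_mul]; ring_nf
  rw [derivative_gegenbauer, derivative_gegenbauerShifted_raise hl, sub_comp, mul_comp, mul_comp,
    one_sub_two_mul_X_comp, C_comp, derivative_gegenbauer, gegenbauer]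
  linear_combination (gegenbauerShifted l w).comp (C (1 / 2) * (1 - X)) * hC

lemma one_sub_X_sq_mul_derivative_gegenbauer_succ (hl : 0 < l) (w : ℕ) :
    (1 - X ^ 2) * derivative (gegenbauer l (w + 1)) =
      C ((w : ℝ) + 2 * l) * gegenbauer l w - C ((w : ℝ) + 1) * (X * gegenbauer l (w + 1)) := by
  linear_combination derivative_gegenbauer_raise hl w + X * derivative_gegenbauer_lower hl w

lemma one_sub_X_sq_mul_derivative_gegenbauer (hl : 0 < l) (w : ℕ) :
    (1 - X ^ 2) * derivative (gegenbauer l w) =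
      C ((w : ℝ) + 2 * l) * (X * gegenbauer l w) - C ((w : ℝ) + 1) * gegenbauer l (w + 1) := by
  linear_combination derivative_gegenbauer_lower hl w + X * derivative_gegenbauer_raise hl w

lemma gegenbauer_three_term (hl : 0 < l) (w : ℕ) :
    C (2 * ((w : ℝ) + 1 + l)) * (X * gegenbauer l (w + 1)) =
      C ((w : ℝ) + 2) * gegenbauer l (w + 2) + C ((w : ℝ) + 2 * l) * gegenbauer l w := by
  have h₁ := one_sub_X_sq_mul_derivative_gegenbauer_succ hl w
  have h₂ := one_sub_X_sq_mul_derivative_gegenbauer hl (w + 1)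
  rw [h₁] at h₂
  simp only [map_add, map_mul, map_natCast, map_one, map_ofNat, Nat.cast_succ] at h₂ ⊢
  linear_combination -h₂

lemma gegenbauer_differential_equation (hl : 0 < l) (w : ℕ) :
    (1 - X ^ 2) * derivative (derivative (gegenbauer l w)) =
      C (2 * l + 1) * (X * derivative (gegenbauer l w)) -
        C ((w : ℝ) * (w + 2 * l)) * gegenbauer l w := by
  have h := congrArg derivative (one_sub_X_sq_mul_derivative_gegenbauer hl w)
  have hlower := derivative_gegenbauer_lower hl w
  have hraise := derivative_gegenbauer_raise hl w
  simp only [derivative_mul, derivative_sub, derivative_C, derivative_one, derivative_X,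
    derivative_X_pow] at h
  simp only [map_add, map_mul, map_natCast, map_one, map_ofNat, Nat.cast_ofNat] at *
  linear_combination h - (w + 1) * hraise

end Gegenbauer

section Weight

lemma intervalIntegrable_one_sub_sq_rpow {a : ℝ} (ha : -1 < a) :
    IntervalIntegrable (fun x : ℝ ↦ (1 - x ^ 2) ^ a) volume (-1) 1 := by
  have left : IntervalIntegrable (fun x : ℝ ↦ (1 - x ^ 2) ^ a) volume (-1) 0 := by
    have hsing : IntervalIntegrable (fun x : ℝ ↦ (x + 1) ^ a) volume (-1) 0 := by
      simpa using (intervalIntegral.intervalIntegrable_rpow' (a := 0) (b := 1) ha).comp_add_right 1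
    have hcont : ContinuousOn (fun x : ℝ ↦ (1 - x) ^ a) (Set.uIcc (-1) 0) := by
      refine ContinuousOn.rpow_const (by fun_prop) fun x hx ↦ Or.inl ?_
      rw [Set.uIcc_of_le (by norm_num)] at hx
      linarith [hx.2]
    refine (hsing.mul_continuousOn hcont).congr fun x hx ↦ ?_
    rw [Set.uIoc_of_le (by norm_num)] at hx
    change (x + 1) ^ a * (1 - x) ^ a = (1 - x ^ 2) ^ a
    rw [← Real.mul_rpow (by linarith [hx.1]) (by linarith [hx.2])]
    ring_nf
  have right : IntervalIntegrable (fun x : ℝ ↦ (1 - x ^ 2) ^ a) volume 0 1 := by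
    rw [IntervalIntegrable.iff_comp_neg]
    simpa using left.symm
  exact left.trans right

lemma integral_rpow_mul_one_sub_rpow {u v : ℝ} (hu : 0 < u) (hv : 0 < v) :
    ∫ t in (0 : ℝ)..1, t ^ (u - 1) * (1 - t) ^ (v - 1) = ProbabilityTheory.beta u v := by
  rw [ProbabilityTheory.beta_eq_betaIntegralReal u v hu hv, Complex.betaIntegral,
    ← Complex.ofReal_re (∫ t in (0 : ℝ)..1, t ^ (u - 1) * (1 - t) ^ (v - 1)),
    ← intervalIntegral.integral_ofReal]
  congr 1
  refine intervalIntegral.integral_congr fun t ht ↦ ?_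
  rw [Set.uIcc_of_le zero_le_one] at ht
  rw [Complex.ofReal_mul, Complex.ofReal_cpow ht.1, Complex.ofReal_cpow (sub_nonneg.2 ht.2)]
  push_cast
  rfl

lemma integral_one_sub_sq_rpow_eq_beta {a : ℝ} (ha : -1 < a) :
    ∫ x in (-1 : ℝ)..1, (1 - x ^ 2) ^ a =
      2 * 4 ^ a * ProbabilityTheory.beta (a + 1) (a + 1) := by
  have hquad : ∀ t ∈ Set.uIcc (0 : ℝ) 1,
      (1 - (2 * t - 1) ^ 2) ^ a = 4 ^ a * (t ^ (a + 1 - 1) * (1 - t) ^ (a + 1 - 1)) := by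
    intro t ht
    rw [Set.uIcc_of_le zero_le_one] at ht
    have ht' : 0 ≤ 1 - t := sub_nonneg.2 ht.2
    rw [add_sub_cancel_right, ← Real.mul_rpow ht.1 ht',
      ← Real.mul_rpow (by norm_num) (mul_nonneg ht.1 ht')]
    ring_nf
  calc _ = 2 * ∫ t in (0 : ℝ)..1, (1 - (2 * t - 1) ^ 2) ^ a := by
        have h := intervalIntegral.smul_integral_comp_mul_sub (a := 0) (b := 1)
          (fun x : ℝ ↦ (1 - x ^ 2) ^ a) 2 1
        rw [← smul_eq_mul, h]
        norm_num
    _ = _ := by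
        rw [intervalIntegral.integral_congr hquad, intervalIntegral.integral_const_mul,
          integral_rpow_mul_one_sub_rpow (by linarith) (by linarith), mul_assoc]

lemma integral_one_sub_sq_rpow {a : ℝ} (ha : -1 < a) :
    ∫ x in (-1 : ℝ)..1, (1 - x ^ 2) ^ a =
      Real.sqrt Real.pi * Real.Gamma (a + 1) / Real.Gamma (a + 3 / 2) := by
  have hdup := Real.Gamma_mul_Gamma_add_half (a + 1)
  have hpow : (2 : ℝ) ^ (1 - 2 * (a + 1)) * (2 * 4 ^ a) = 1 := by
    rw [show (4 : ℝ) = 2 ^ (2 : ℝ) by norm_num, ← Real.rpow_mul zero_le_two, mul_comm 2 (2 ^ _ : ℝ),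
      ← Real.rpow_add_one two_ne_zero, ← Real.rpow_add two_pos,
      show 1 - 2 * (a + 1) + (2 * a + 1) = 0 by ring, Real.rpow_zero]
  have hΓ₁ := Real.Gamma_pos_of_pos (show 0 < a + 3 / 2 by linarith)
  have hΓ₂ := Real.Gamma_pos_of_pos (show 0 < 2 * (a + 1) by linarith)
  rw [show a + 1 + 1 / 2 = a + 3 / 2 by ring] at hdup
  rw [integral_one_sub_sq_rpow_eq_beta ha, ProbabilityTheory.beta, ← two_mul, ← mul_div_assoc,
    div_eq_div_iff hΓ₂.ne' hΓ₁.ne']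
  linear_combination 2 * 4 ^ a * Real.Gamma (a + 1) * hdup +
    Real.Gamma (a + 1) * Real.Gamma (2 * (a + 1)) * √Real.pi * hpow

/-- Integration of a polynomial over `[-1, 1]` against the ultraspherical weight `(1 - x²)^a`. -/
noncomputable def ultrasphericalIntegral (a : ℝ) (f : ℝ[X]) : ℝ :=
  ∫ x in (-1 : ℝ)..1, (1 - x ^ 2) ^ a * f.eval x

variable {a : ℝ}

lemma intervalIntegrable_one_sub_sq_rpow_mul_eval (ha : -1 < a) (f : ℝ[X]) :
    IntervalIntegrable (fun x : ℝ ↦ (1 - x ^ 2) ^ a * f.eval x) volume (-1) 1 :=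
  (intervalIntegrable_one_sub_sq_rpow ha).mul_continuousOn f.continuousOn

lemma ultrasphericalIntegral_one (ha : -1 < a) :
    ultrasphericalIntegral a 1 =
      Real.sqrt Real.pi * Real.Gamma (a + 1) / Real.Gamma (a + 3 / 2) := by
  simpa [ultrasphericalIntegral] using integral_one_sub_sq_rpow ha

lemma ultrasphericalIntegral_C_mul (a c : ℝ) (f : ℝ[X]) :
    ultrasphericalIntegral a (C c * f) = c * ultrasphericalIntegral a f := by
  simp only [ultrasphericalIntegral, eval_mul, eval_C, ← intervalIntegral.integral_const_mul,
    mul_left_comm c]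

lemma ultrasphericalIntegral_add (ha : -1 < a) (f g : ℝ[X]) :
    ultrasphericalIntegral a (f + g) =
      ultrasphericalIntegral a f + ultrasphericalIntegral a g := by
  simp only [ultrasphericalIntegral, eval_add, mul_add]
  exact intervalIntegral.integral_add (intervalIntegrable_one_sub_sq_rpow_mul_eval ha f)
    (intervalIntegrable_one_sub_sq_rpow_mul_eval ha g)

lemma ultrasphericalIntegral_sub (ha : -1 < a) (f g : ℝ[X]) :
    ultrasphericalIntegral a (f - g) =
      ultrasphericalIntegral a f - ultrasphericalIntegral a g := by
  simp only [ultrasphericalIntegral, eval_sub, mul_sub]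
  exact intervalIntegral.integral_sub (intervalIntegrable_one_sub_sq_rpow_mul_eval ha f)
    (intervalIntegrable_one_sub_sq_rpow_mul_eval ha g)

lemma ultrasphericalIntegral_one_sub_X_sq_mul (a : ℝ) (f : ℝ[X]) :
    ultrasphericalIntegral a ((1 - X ^ 2) * f) = ultrasphericalIntegral (a + 1) f := by
  refine intervalIntegral.integral_congr_uIoo fun x hx ↦ ?_
  rw [Set.uIoo_of_le (by norm_num)] at hx
  have hx : 0 < 1 - x ^ 2 := by nlinarith [hx.1, hx.2]
  simp only [eval_mul, eval_sub, eval_one, eval_pow, eval_X, Real.rpow_add_one hx.ne', mul_assoc]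

lemma ultrasphericalIntegral_one_sub_X_sq_mul_derivative (ha : -1 < a) (f : ℝ[X]) :
    ultrasphericalIntegral a ((1 - X ^ 2) * derivative f) =
      2 * (a + 1) * ultrasphericalIntegral a (X * f) := by
  have hderiv : ∀ x ∈ Set.Ioo (-1 : ℝ) 1, HasDerivAt (fun x ↦ (1 - x ^ 2) ^ (a + 1) * f.eval x)
      ((1 - x ^ 2) ^ a * ((1 - X ^ 2) * derivative f - C (2 * (a + 1)) * (X * f)).eval x) x := by
    intro x hx
    have hpos : 0 < 1 - x ^ 2 := by nlinarith [hx.1, hx.2]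
    have hbase : HasDerivAt (fun x : ℝ ↦ 1 - x ^ 2) (-(2 * x)) x := by
      simpa using (hasDerivAt_pow 2 x).const_sub 1
    refine ((hbase.rpow_const (p := a + 1) (Or.inl hpos.ne')).mul (f.hasDerivAt x)).congr_deriv ?_
    simp only [add_sub_cancel_right, Real.rpow_add_one hpos.ne', eval_mul, eval_sub, eval_one,
      eval_pow, eval_X, eval_C]
    ring
  have hcont : Continuous fun x : ℝ ↦ (1 - x ^ 2) ^ (a + 1) * f.eval x :=
    (Continuous.rpow_const (by fun_prop) fun _ ↦ Or.inr (by linarith)).mul f.continuous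
  have hboundary := intervalIntegral.integral_eq_sub_of_hasDerivAt_of_le (by norm_num)
    hcont.continuousOn hderiv (intervalIntegrable_one_sub_sq_rpow_mul_eval ha _)
  rw [← ultrasphericalIntegral, ultrasphericalIntegral_sub ha, ultrasphericalIntegral_C_mul]
    at hboundary
  norm_num [Real.zero_rpow (show a + 1 ≠ 0 by linarith)] at hboundary
  linarith

end Weight

section GegenbauerOrthogonality

variable {l : ℝ}

lemma ultrasphericalIntegral_derivative_mul_derivative (hl : 0 < l) (w v : ℕ) :
    ultrasphericalIntegral (l - 1 / 2)
        ((1 - X ^ 2) * (derivative (gegenbauer l w) * derivative (gegenbauer l v))) =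
      w * (w + 2 * l) * ultrasphericalIntegral (l - 1 / 2) (gegenbauer l w * gegenbauer l v) := by
  have ha : -1 < l - 1 / 2 := by linarith
  have hparts := ultrasphericalIntegral_one_sub_X_sq_mul_derivative ha
    (derivative (gegenbauer l w) * gegenbauer l v)
  have hexpand : (1 - X ^ 2) * derivative (derivative (gegenbauer l w) * gegenbauer l v) =
      C (2 * l + 1) * (X * (derivative (gegenbauer l w) * gegenbauer l v)) +
        (1 - X ^ 2) * (derivative (gegenbauer l w) * derivative (gegenbauer l v)) -
        C (w * (w + 2 * l)) * (gegenbauer l w * gegenbauer l v) := by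
    rw [derivative_mul]
    linear_combination gegenbauer l v * gegenbauer_differential_equation hl w
  rw [hexpand, ultrasphericalIntegral_sub ha, ultrasphericalIntegral_add ha,
    ultrasphericalIntegral_C_mul, ultrasphericalIntegral_C_mul] at hparts
  linear_combination hparts

lemma ultrasphericalIntegral_gegenbauer_mul_of_ne (hl : 0 < l) {w v : ℕ} (h : w ≠ v) :
    ultrasphericalIntegral (l - 1 / 2) (gegenbauer l w * gegenbauer l v) = 0 := by
  have hwv := ultrasphericalIntegral_derivative_mul_derivative hl w v
  have hvw := ultrasphericalIntegral_derivative_mul_derivative hl v w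
  rw [mul_comm (gegenbauer l v), mul_comm (derivative (gegenbauer l v)), hwv] at hvw
  have heigenvalues : ((w : ℝ) - v) * (w + v + 2 * l) ≠ 0 :=
    mul_ne_zero (sub_ne_zero.2 (Nat.cast_injective.ne h)) (by positivity)
  apply (mul_eq_zero.mp _).resolve_left heigenvalues
  linear_combination hvw

lemma ultrasphericalIntegral_X_mul_gegenbauer_mul_succ (hl : 0 < l) (w : ℕ) :
    2 * ((w : ℝ) + 1 + l) *
        ultrasphericalIntegral (l - 1 / 2) (X * (gegenbauer l w * gegenbauer l (w + 1))) =
      (w + 2 * l) * ultrasphericalIntegral (l - 1 / 2) (gegenbauer l w * gegenbauer l w) := by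
  have hexpand : C (2 * ((w : ℝ) + 1 + l)) * (X * (gegenbauer l w * gegenbauer l (w + 1))) =
      C ((w : ℝ) + 2) * (gegenbauer l (w + 2) * gegenbauer l w) +
        C ((w : ℝ) + 2 * l) * (gegenbauer l w * gegenbauer l w) := by
    linear_combination gegenbauer l w * gegenbauer_three_term hl w
  rw [← ultrasphericalIntegral_C_mul, hexpand, ultrasphericalIntegral_add (by linarith),
    ultrasphericalIntegral_C_mul, ultrasphericalIntegral_C_mul,
    ultrasphericalIntegral_gegenbauer_mul_of_ne hl (by lia), mul_zero, zero_add]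

lemma ultrasphericalIntegral_gegenbauer_succ_mul_self (hl : 0 < l) (w : ℕ) :
    ((w : ℝ) + 1) * (w + 1 + l) *
        ultrasphericalIntegral (l - 1 / 2) (gegenbauer l (w + 1) * gegenbauer l (w + 1)) =
      (w + l) * (w + 2 * l) *
        ultrasphericalIntegral (l - 1 / 2) (gegenbauer l w * gegenbauer l w) := by
  have ha : -1 < l - 1 / 2 := by linarith
  have hparts := ultrasphericalIntegral_one_sub_X_sq_mul_derivative ha
    (gegenbauer l w * gegenbauer l (w + 1))
  have hexpand : (1 - X ^ 2) * derivative (gegenbauer l w * gegenbauer l (w + 1)) =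
      C ((w : ℝ) + 2 * l) * (gegenbauer l w * gegenbauer l w) +
        C (2 * l - 1) * (X * (gegenbauer l w * gegenbauer l (w + 1))) -
        C ((w : ℝ) + 1) * (gegenbauer l (w + 1) * gegenbauer l (w + 1)) := by
    have hC : (C ((w : ℝ) + 2 * l) - C ((w : ℝ) + 1) : ℝ[X]) = C (2 * l - 1) := by
      rw [← C_sub]; ring_nf
    rw [derivative_mul]
    linear_combination gegenbauer l (w + 1) * one_sub_X_sq_mul_derivative_gegenbauer hl w +
      gegenbauer l w * one_sub_X_sq_mul_derivative_gegenbauer_succ hl w +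
      X * gegenbauer l w * gegenbauer l (w + 1) * hC
  rw [hexpand, ultrasphericalIntegral_sub ha, ultrasphericalIntegral_add ha] at hparts
  simp only [ultrasphericalIntegral_C_mul] at hparts
  linear_combination -ultrasphericalIntegral_X_mul_gegenbauer_mul_succ hl w - (w + 1 + l) * hparts

/-- The squared norm of `C_w^l` for the weight `(1 - x²)^(l - 1/2)` on `[-1, 1]`. -/
noncomputable def gegenbauerNormSq (l : ℝ) (w : ℕ) : ℝ :=
  Real.sqrt Real.pi * Real.Gamma (l + 1 / 2) * poch (2 * l) w /
    (Real.Gamma l * w.factorial * (w + l))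

lemma ultrasphericalIntegral_gegenbauer_mul_self (hl : 0 < l) (w : ℕ) :
    ultrasphericalIntegral (l - 1 / 2) (gegenbauer l w * gegenbauer l w) =
      gegenbauerNormSq l w := by
  induction w with
  | zero =>
    rw [gegenbauer_zero, one_mul, ultrasphericalIntegral_one (by linarith),
      show l - 1 / 2 + 3 / 2 = l + 1 by ring, Real.Gamma_add_one hl.ne', gegenbauerNormSq]
    norm_num [poch, mul_comm]
    ring_nf
  | succ w ih =>
    have hrec := ultrasphericalIntegral_gegenbauer_succ_mul_self hl w
    rw [ih] at hrec
    apply mul_left_cancel₀ (show ((w : ℝ) + 1) * (w + 1 + l) ≠ 0 by positivity)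
    rw [hrec, gegenbauerNormSq, gegenbauerNormSq, poch_succ, Nat.factorial_succ]
    push_cast
    field_simp
    ring

lemma ultrasphericalIntegral_gegenbauer_mul (hl : 0 < l) (w v : ℕ) :
    ultrasphericalIntegral (l - 1 / 2) (gegenbauer l w * gegenbauer l v) =
      if w = v then gegenbauerNormSq l w else 0 := by
  split_ifs with h
  · rw [← h, ultrasphericalIntegral_gegenbauer_mul_self hl]
  · exact ultrasphericalIntegral_gegenbauer_mul_of_ne hl h

end GegenbauerOrthogonality

section MatrixGegenbauer

/-- The polynomial part of the weight matrix `W_{p,n}`, where `q = n - p`. -/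
noncomputable def weightPoly (p q : ℝ) : Matrix (Fin 2) (Fin 2) ℝ[X] :=
  !![C p * X ^ 2 + C q, -C (p + q) * X; -C (p + q) * X, C q * X ^ 2 + C p]

/-- The matrix polynomial obtained from `P_w` by clearing the denominators
`(n + 1) (p + w)` and `(n + 1) (n - p + w)` of its rows, where `q = n - p`. -/
noncomputable def matrixGegenbauer (p q : ℝ) (w : ℕ) : Matrix (Fin 2) (Fin 2) ℝ[X] :=
  !![C p * gegenbauer ((p + q + 1) / 2) w + X * derivative (gegenbauer ((p + q + 1) / 2) w),
      derivative (gegenbauer ((p + q + 1) / 2) w);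
    derivative (gegenbauer ((p + q + 1) / 2) w),
      C q * gegenbauer ((p + q + 1) / 2) w + X * derivative (gegenbauer ((p + q + 1) / 2) w)]

/-- The Gram integrand `P_w W_{p,n} P_vᵀ`, up to the scalar weight and the normalization of
`matrixGegenbauer`. -/
noncomputable def gramPoly (p q : ℝ) (w v : ℕ) : Matrix (Fin 2) (Fin 2) ℝ[X] :=
  matrixGegenbauer p q w * weightPoly p q * (matrixGegenbauer p q v)ᵀ

lemma weightPoly_swap (p q : ℝ) : weightPoly q p = (weightPoly p q).submatrix Fin.rev Fin.rev := by
  ext i j : 2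
  fin_cases i <;> fin_cases j <;> simp [weightPoly, add_comm]

lemma matrixGegenbauer_swap (p q : ℝ) (w : ℕ) :
    matrixGegenbauer q p w = (matrixGegenbauer p q w).submatrix Fin.rev Fin.rev := by
  ext i j : 2
  fin_cases i <;> fin_cases j <;> simp [matrixGegenbauer, add_comm q p]

lemma gramPoly_swap (p q : ℝ) (w v : ℕ) :
    gramPoly q p w v = (gramPoly p q w v).submatrix Fin.rev Fin.rev := by
  rw [gramPoly, gramPoly, weightPoly_swap, matrixGegenbauer_swap p, matrixGegenbauer_swap p,
    transpose_submatrix, submatrix_mul _ _ _ Fin.rev _ Fin.rev_bijective,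
    submatrix_mul _ _ _ Fin.rev _ Fin.rev_bijective]

lemma gramPoly_zero_zero (p q : ℝ) (w v : ℕ) :
    let g := gegenbauer ((p + q + 1) / 2)
    gramPoly p q w v 0 0 =
      C p * (C (p * (q + 1)) * ((1 - X ^ 2) * (g w * g v)) +
        (1 - X ^ 2) * ((1 - X ^ 2) * (derivative (g w) * derivative (g v))) -
        C p * ((1 - X ^ 2) * derivative (X * (g w * g v))) +
        C (p * (p + q)) * (X * (X * (g w * g v)))) := by
  simp only [gramPoly, matrixGegenbauer, weightPoly, Matrix.mul_apply, transpose_apply,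
    Fin.sum_univ_two, of_apply, cons_val', cons_val_fin_one, cons_val_zero, cons_val_one, map_add,
    map_mul, map_one, derivative_mul, derivative_X]
  ring

lemma gramPoly_zero_one (p q : ℝ) (w v : ℕ) :
    let g := gegenbauer ((p + q + 1) / 2)
    gramPoly p q w v 0 1 =
      C (p * q) * ((1 - X ^ 2) * derivative (g w * g v) - C (p + q) * (X * (g w * g v))) := by
  simp only [gramPoly, matrixGegenbauer, weightPoly, Matrix.mul_apply, transpose_apply,
    Fin.sum_univ_two, of_apply, cons_val', cons_val_fin_one, cons_val_zero, cons_val_one, map_add,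
    map_mul, derivative_mul]
  ring

variable {p q : ℝ}

lemma ultrasphericalIntegral_gramPoly_zero_zero (hpq : 0 < p + q) (w v : ℕ) :
    ultrasphericalIntegral ((p + q) / 2 - 1) (gramPoly p q w v 0 0) =
      if w = v then p * (p + w) * (q + w + 1) * gegenbauerNormSq ((p + q + 1) / 2) w else 0 := by
  have ha : -1 < (p + q) / 2 - 1 := by linarith
  have hl : 0 < (p + q + 1) / 2 := by linarith
  have horth := ultrasphericalIntegral_gegenbauer_mul hl w v
  have henergy := ultrasphericalIntegral_derivative_mul_derivative hl w v
  rw [show (p + q + 1) / 2 - 1 / 2 = (p + q) / 2 - 1 + 1 by ring] at horth henergy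
  rw [gramPoly_zero_zero, ultrasphericalIntegral_C_mul, ultrasphericalIntegral_add ha,
    ultrasphericalIntegral_sub ha, ultrasphericalIntegral_add ha]
  simp only [ultrasphericalIntegral_C_mul]
  rw [ultrasphericalIntegral_one_sub_X_sq_mul_derivative ha,
    ultrasphericalIntegral_one_sub_X_sq_mul, ultrasphericalIntegral_one_sub_X_sq_mul, henergy,
    horth]
  split_ifs <;> ring

lemma ultrasphericalIntegral_gramPoly_zero_one (hpq : 0 < p + q) (w v : ℕ) :
    ultrasphericalIntegral ((p + q) / 2 - 1) (gramPoly p q w v 0 1) = 0 := by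
  have ha : -1 < (p + q) / 2 - 1 := by linarith
  rw [gramPoly_zero_one, ultrasphericalIntegral_C_mul, ultrasphericalIntegral_sub ha,
    ultrasphericalIntegral_C_mul, ultrasphericalIntegral_one_sub_X_sq_mul_derivative ha]
  ring

lemma ultrasphericalIntegral_gramPoly (hpq : 0 < p + q) (w v : ℕ) (i j : Fin 2) :
    ultrasphericalIntegral ((p + q) / 2 - 1) (gramPoly p q w v i j) =
      if w = v then
        diagonal ![p * (p + w) * (q + w + 1), q * (q + w) * (p + w + 1)] i j *
          gegenbauerNormSq ((p + q + 1) / 2) w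
      else 0 := by
  have hqp : 0 < q + p := by rwa [add_comm]
  have h₁₁ := ultrasphericalIntegral_gramPoly_zero_zero hqp w v
  have h₁₀ := ultrasphericalIntegral_gramPoly_zero_one hqp w v
  rw [add_comm q p, gramPoly_swap] at h₁₁ h₁₀
  fin_cases i <;> fin_cases j
  · simpa using ultrasphericalIntegral_gramPoly_zero_zero hpq w v
  · simpa using ultrasphericalIntegral_gramPoly_zero_one hpq w v
  · simpa using h₁₀
  · simpa using h₁₁

end MatrixGegenbauer

section Normalization

variable {n : ℕ} {p : ℝ}

lemma geg_sub_one (n w : ℕ) (x : ℝ) :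
    geg (((n : ℝ) + 3) / 2) ((w : ℤ) - 1) x =
      (derivative (gegenbauer (((n : ℝ) + 1) / 2) w)).eval x / (n + 1) := by
  cases w with
  | zero => simp [geg_of_neg, gegenbauer_zero]
  | succ w =>
    rw [derivative_gegenbauer_succ (by positivity), Nat.cast_succ, add_sub_cancel_right,
      geg_natCast, show ((n : ℝ) + 1) / 2 + 1 = (n + 3) / 2 by ring, eval_mul, eval_C]
    field_simp

lemma geg_sub_two (n w : ℕ) (x : ℝ) :
    geg (((n : ℝ) + 3) / 2) ((w : ℤ) - 2) x =
      (x * (derivative (gegenbauer (((n : ℝ) + 1) / 2) w)).eval x -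
        w * (gegenbauer (((n : ℝ) + 1) / 2) w).eval x) / (n + 1) := by
  cases w with
  | zero => simp [geg_of_neg, gegenbauer_zero]
  | succ w =>
    have hlower := congrArg (eval x)
      (derivative_gegenbauer_lower (show 0 < ((n : ℝ) + 1) / 2 by positivity) w)
    rw [show ((w + 1 : ℕ) : ℤ) - 2 = w - 1 by push_cast; ring, geg_sub_one, hlower]
    simp

lemma Pmat_eq_diagonal_mul (hp : 0 < p) (hpn : p < n) (w : ℕ) (x : ℝ) :
    Pmat n p w x = diagonal ![((n + 1) * (p + w))⁻¹, ((n + 1) * (n - p + w))⁻¹] *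
      (matrixGegenbauer p (n - p) w).map (eval x) := by
  have hpw : p + w ≠ 0 := by positivity
  have hqw : (n : ℝ) - p + w ≠ 0 :=
    (add_pos_of_pos_of_nonneg (sub_pos.2 hpn) w.cast_nonneg).ne'
  ext i j
  rw [diagonal_mul, map_apply]
  fin_cases i <;> fin_cases j <;>
    simp [Pmat, matrixGegenbauer, geg_natCast, geg_sub_one, geg_sub_two] <;>
    field_simp
  all_goals ring

lemma Wmat_eq_smul (n : ℕ) (p x : ℝ) :
    Wmat n p x =
      (1 - x ^ 2) ^ ((n : ℝ) / 2 - 1) • (weightPoly p (n - p)).map (eval x) := by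
  rw [Wmat]
  congr 1
  ext i j
  fin_cases i <;> fin_cases j <;> simp [weightPoly, add_sub_assoc]

/-- The denominator under the square root in `S_w`. -/
noncomputable def normDenom (n w : ℕ) : ℝ :=
  Real.sqrt Real.pi * 2 ^ (w / 2) * Real.Gamma ((n : ℝ) / 2 + 1 + (w / 2 : ℕ)) *
    ∏ k ∈ Finset.range ((w + 1) / 2), ((n : ℝ) + 2 * k + 1)

lemma normDenom_succ (n w : ℕ) : normDenom n (w + 1) = (n + 1 + w) * normDenom n w := by
  unfold normDenom
  rcases Nat.even_or_odd' w with ⟨m, rfl | rfl⟩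
  · rw [show (2 * m + 1) / 2 = m by lia, show 2 * m / 2 = m by lia,
      show (2 * m + 1 + 1) / 2 = m + 1 by lia, Finset.prod_range_succ]
    push_cast
    ring
  · rw [show (2 * m + 1 + 1) / 2 = m + 1 by lia, show (2 * m + 1) / 2 = m by lia,
      show (2 * m + 1 + 1 + 1) / 2 = m + 1 by lia, Nat.cast_succ m, ← add_assoc,
      Real.Gamma_add_one (by positivity)]
    push_cast
    ring

lemma normDenom_eq (n w : ℕ) :
    normDenom n w = Real.sqrt Real.pi * Real.Gamma ((n : ℝ) / 2 + 1) * poch (n + 1) w := by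
  induction w with
  | zero => simp [normDenom, poch]
  | succ w ih => rw [normDenom_succ, ih, poch_succ]; ring

/-- The square of the scalar factor of `S_w`. -/
noncomputable def normScale (n w : ℕ) : ℝ :=
  (w.factorial * ((n : ℝ) + 1) * (n + 2 * w + 1) * Real.Gamma ((n : ℝ) / 2 + 3 / 2)) /
    normDenom n w

lemma normScale_mul_gegenbauerNormSq (n w : ℕ) :
    normScale n w * gegenbauerNormSq (((n : ℝ) + 1) / 2) w = (n + 1) ^ 2 := by
  have hΓ : Real.Gamma ((n : ℝ) / 2 + 3 / 2) = (n + 1) / 2 * Real.Gamma ((n + 1) / 2) := by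
    rw [← Real.Gamma_add_one (by positivity)]
    ring_nf
  have hpoch := poch_pos (show 0 < (n : ℝ) + 1 by positivity) w
  rw [normScale, gegenbauerNormSq, normDenom_eq, hΓ,
    show ((n : ℝ) + 1) / 2 + 1 / 2 = n / 2 + 1 by ring, mul_div_cancel₀ _ two_ne_zero]
  have hw : (w : ℝ) + (n + 1) / 2 = (n + 2 * w + 1) / 2 := by ring
  rw [hw]
  field_simp

lemma normScale_nonneg (n w : ℕ) : 0 ≤ normScale n w := by
  rw [normScale, normDenom_eq]
  have hpoch := poch_pos (show 0 < (n : ℝ) + 1 by positivity) w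
  positivity

/-- The factor by which a row of `matrixGegenbauer` has to be multiplied in order to be normalized:
the first row for `(a, b) = (p, n - p)`, the second one for `(a, b) = (n - p, p)`. -/
noncomputable def rowScale (n : ℕ) (a b : ℝ) (w : ℕ) : ℝ :=
  √(normScale n w) * √((a + w) / (a * (b + w + 1))) * ((n + 1) * (a + w))⁻¹

lemma rowScale_mul_self_mul (n : ℕ) {a b : ℝ} (ha : 0 < a) (hb : 0 < b) (w : ℕ) :
    rowScale n a b w * rowScale n a b w *
      (a * (a + w) * (b + w + 1) * gegenbauerNormSq (((n : ℝ) + 1) / 2) w) = 1 := by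
  have hscale := Real.mul_self_sqrt (normScale_nonneg n w)
  have hroot := Real.mul_self_sqrt (show 0 ≤ (a + w) / (a * (b + w + 1)) by positivity)
  calc _ = (√(normScale n w) * √(normScale n w)) * gegenbauerNormSq (((n : ℝ) + 1) / 2) w *
        (√((a + w) / (a * (b + w + 1))) * √((a + w) / (a * (b + w + 1)))) *
        (((n + 1) * (a + w))⁻¹ ^ 2 * (a * (a + w) * (b + w + 1))) := by rw [rowScale]; ring
    _ = (n + 1) ^ 2 * ((a + w) / (a * (b + w + 1))) *
        (((n + 1) * (a + w))⁻¹ ^ 2 * (a * (a + w) * (b + w + 1))) := by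
      rw [hscale, hroot, normScale_mul_gegenbauerNormSq]
    _ = 1 := by field_simp

/-- The diagonal scaling that turns `matrixGegenbauer p (n - p) w` into the orthonormal
polynomial `Q_w`. -/
noncomputable def qScale (n : ℕ) (p : ℝ) (w : ℕ) : Fin 2 → ℝ :=
  ![rowScale n p (n - p) w, rowScale n (n - p) p w]

lemma qScale_mul_self_mul (hp : 0 < p) (hpn : p < n) (w : ℕ) (i : Fin 2) :
    qScale n p w i * qScale n p w i *
      (![p * (p + w) * (n - p + w + 1), (n - p) * (n - p + w) * (p + w + 1)] i *
        gegenbauerNormSq (((n : ℝ) + 1) / 2) w) = 1 := by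
  fin_cases i
  · exact rowScale_mul_self_mul n hp (sub_pos.2 hpn) w
  · exact rowScale_mul_self_mul n (sub_pos.2 hpn) hp w

lemma Qmat_eq_diagonal_mul (hp : 0 < p) (hpn : p < n) (w : ℕ) (x : ℝ) :
    Qmat n p w x = diagonal (qScale n p w) * (matrixGegenbauer p (n - p) w).map (eval x) := by
  rw [Qmat, Pmat_eq_diagonal_mul hp hpn, ← mul_assoc, Smat, ← normDenom, ← normScale,
    smul_mul_assoc, diagonal_mul_diagonal, ← diagonal_smul]
  congr 2
  ext i
  fin_cases i <;> simp [qScale, rowScale, mul_assoc]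

end Normalization

section Orthonormality

variable {n : ℕ} {p : ℝ}

lemma Qmat_mul_Wmat_mul_transpose_apply (hp : 0 < p) (hpn : p < n) (w v : ℕ) (x : ℝ)
    (i j : Fin 2) :
    (Qmat n p w x * Wmat n p x * (Qmat n p v x)ᵀ) i j =
      qScale n p w i * qScale n p v j *
        ((1 - x ^ 2) ^ ((n : ℝ) / 2 - 1) * (gramPoly p (n - p) w v i j).eval x) := by
  have hgram : (gramPoly p (n - p) w v).map (eval x) =
      (matrixGegenbauer p (n - p) w).map (eval x) * (weightPoly p (n - p)).map (eval x) *
        ((matrixGegenbauer p (n - p) v).map (eval x))ᵀ := by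
    simp only [gramPoly, ← coe_evalRingHom, Matrix.map_mul, transpose_map]
  rw [← map_apply (M := gramPoly p (n - p) w v) (f := eval x), hgram, Qmat_eq_diagonal_mul hp hpn,
    Qmat_eq_diagonal_mul hp hpn, Wmat_eq_smul, transpose_mul, diagonal_transpose, mul_smul_comm,
    smul_mul_assoc, Matrix.smul_apply, ← mul_assoc, mul_diagonal, mul_assoc (diagonal _),
    mul_assoc (diagonal _), diagonal_mul, smul_eq_mul]
  ring

lemma intervalIntegrable_Qmat_mul_Wmat_mul_transpose (hp : 0 < p) (hpn : p < n) (w v : ℕ)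
    (i j : Fin 2) :
    IntervalIntegrable (fun x ↦ (Qmat n p w x * Wmat n p x * (Qmat n p v x)ᵀ) i j)
      volume (-1) 1 := by
  simp only [Qmat_mul_Wmat_mul_transpose_apply hp hpn]
  exact (intervalIntegrable_one_sub_sq_rpow_mul_eval (by linarith) _).const_mul _

lemma integral_Qmat_mul_Wmat_mul_transpose (hp : 0 < p) (hpn : p < n) (w v : ℕ) :
    (of fun i j ↦ ∫ x in (-1 : ℝ)..1, (Qmat n p w x * Wmat n p x * (Qmat n p v x)ᵀ) i j) =
      if w = v then 1 else 0 := by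
  ext i j
  have hgram := ultrasphericalIntegral_gramPoly
    (show 0 < p + ((n : ℝ) - p) by linarith) w v i j
  rw [add_sub_cancel] at hgram
  simp only [of_apply, Qmat_mul_Wmat_mul_transpose_apply hp hpn]
  rw [intervalIntegral.integral_const_mul, ← ultrasphericalIntegral, hgram]
  split_ifs with hwv
  · subst hwv
    rcases eq_or_ne i j with rfl | hij
    · rw [diagonal_apply_eq, qScale_mul_self_mul hp hpn, one_apply_eq]
    · rw [diagonal_apply_ne _ hij, one_apply_ne hij, zero_mul, mul_zero]
  · rw [mul_zero, Matrix.zero_apply]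

end Orthonormality

section Parseval

variable {R 𝕜 Ω κ r k m : Type*} [Fintype r] [Fintype k] [Fintype m]

lemma trace_sum_mul_mul_sum_transpose [CommSemiring R] (s : Finset κ) (A : κ → Matrix r k R)
    (Q : κ → Matrix k m R) (W : Matrix m m R) :
    trace ((∑ w ∈ s, A w * Q w) * W * (∑ v ∈ s, A v * Q v)ᵀ) =
      ∑ w ∈ s, ∑ v ∈ s, trace ((A v)ᵀ * A w * (Q w * W * (Q v)ᵀ)) := by
  have hcycle (w v : κ) : trace (A w * Q w * W * (A v * Q v)ᵀ) =
      trace ((A v)ᵀ * A w * (Q w * W * (Q v)ᵀ)) := by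
    rw [transpose_mul, ← Matrix.mul_assoc, trace_mul_comm]
    simp only [Matrix.mul_assoc]
  simp only [transpose_sum, Matrix.sum_mul, Matrix.mul_sum, trace_sum, hcycle]
  exact Finset.sum_comm

variable [RCLike 𝕜] [MeasurableSpace Ω] {μ : Measure Ω}

lemma integrable_trace_mul (B : Matrix k m 𝕜) {F : Ω → Matrix m k 𝕜}
    (hF : ∀ i j, Integrable (fun x ↦ F x i j) μ) : Integrable (fun x ↦ trace (B * F x)) μ :=
  integrable_finsetSum _ fun _ _ ↦ integrable_finsetSum _ fun _ _ ↦ (hF _ _).const_mul _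

lemma integral_trace_mul (B : Matrix k m 𝕜) {F : Ω → Matrix m k 𝕜}
    (hF : ∀ i j, Integrable (fun x ↦ F x i j) μ) :
    ∫ x, trace (B * F x) ∂μ = trace (B * of fun i j ↦ ∫ x, F x i j ∂μ) := by
  have hterm (i : k) (j : m) := (hF j i).const_mul (B i j)
  simp only [trace, diag_apply, mul_apply, of_apply]
  rw [integral_finsetSum _ fun i _ ↦ integrable_finsetSum _ fun j _ ↦ hterm i j]
  refine Finset.sum_congr rfl fun i _ ↦ ?_
  rw [integral_finsetSum _ fun j _ ↦ hterm i j]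
  simp only [integral_const_mul]

lemma integral_trace_sum_mul_mul_sum_transpose [DecidableEq κ] [DecidableEq k] (s : Finset κ)
    (A : κ → Matrix r k 𝕜) {Q : κ → Ω → Matrix k m 𝕜} {W : Ω → Matrix m m 𝕜}
    (hint : ∀ w v i j, Integrable (fun x ↦ (Q w x * W x * (Q v x)ᵀ) i j) μ)
    (horth : ∀ w v, (of fun i j ↦ ∫ x, (Q w x * W x * (Q v x)ᵀ) i j ∂μ) =
      if w = v then 1 else 0) :
    ∫ x, trace ((∑ w ∈ s, A w * Q w x) * W x * (∑ w ∈ s, A w * Q w x)ᵀ) ∂μ =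
      ∑ w ∈ s, trace (A w * (A w)ᵀ) := by
  have hterm (w v : κ) := integrable_trace_mul ((A v)ᵀ * A w) (hint w v)
  simp only [trace_sum_mul_mul_sum_transpose]
  rw [integral_finsetSum _ fun w _ ↦ integrable_finsetSum _ fun v _ ↦ hterm w v]
  refine Finset.sum_congr rfl fun w hw ↦ ?_
  rw [integral_finsetSum _ fun v _ ↦ hterm w v]
  simp only [integral_trace_mul _ (hint w _), horth]
  rw [Finset.sum_eq_single_of_mem w hw fun v _ hvw ↦ by simp [hvw.symm], if_pos rfl, mul_one,
    trace_mul_comm]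

end Parseval

/-- Finite Parseval identity for the expansion in the orthonormal polynomials `Q_w`. -/
theorem stmt_6 (n : ℕ) (hn : 1 ≤ n) (p : ℝ) (hp : 0 < p) (hpn : p < n)
    (N : ℕ) (A : ℕ → Matrix (Fin 2) (Fin 2) ℝ) :
    ∫ x in (-1 : ℝ)..1,
        Matrix.trace ((∑ w ∈ Finset.range (N + 1), A w * Qmat n p w x) * Wmat n p x *
          (∑ w ∈ Finset.range (N + 1), A w * Qmat n p w x)ᵀ) =
      ∑ w ∈ Finset.range (N + 1), Matrix.trace (A w * (A w)ᵀ) := by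
  have hle : (-1 : ℝ) ≤ 1 := by norm_num
  rw [intervalIntegral.integral_of_le hle]
  refine integral_trace_sum_mul_mul_sum_transpose _ A (fun w v i j ↦ ?_) fun w v ↦ ?_
  · exact (intervalIntegrable_iff_integrableOn_Ioc_of_le hle).1
      (intervalIntegrable_Qmat_mul_Wmat_mul_transpose hp hpn w v i j)
  · simp only [← intervalIntegral.integral_of_le hle]
    exact integral_Qmat_mul_Wmat_mul_transpose hp hpn w v
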